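/- arXiv:1903.06195 — 5 statements merged into one kernel-verified Lean document; each statement's English description precedes it below -/
import Mathlib

section
/- For every LIKE pattern p over an alphabet Σ there exists a LIKE pattern p' over Σ that is normalized (i.e., p' contains no occurrence of the two-symbol substrings %_ or %%) and has the same language as p: a string w ∈ Σ* matches p' if and only if w matches p. -/
/-- A symbol of a LIKE pattern: a constant letter, the single-character
wildcard `_`, or the multi-character wildcard `%`. -/
inductive LikeSym (α : Type) : Type where
  | const : α → LikeSym α
  | wild : LikeSym α      -- the single-character wildcard `_`
  | percent : LikeSym α   -- the multi-character wildcard `%`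

/-- The strings matched by a single pattern symbol. -/
def SymMatches {α : Type} : LikeSym α → List α → Prop
  | .const a, w => w = [a]
  | .wild, w => w.length = 1
  | .percent, _ => True

/-- A string `w` matches a LIKE pattern `p` if `w` splits into consecutive
factors, one per pattern symbol. -/
def Matches {α : Type} : List (LikeSym α) → List α → Prop
  | [], w => w = []
  | s :: p, w => ∃ u v, w = u ++ v ∧ SymMatches s u ∧ Matches p v

/-- A LIKE pattern is normalized if it contains neither `%_` nor `%%`
as a (contiguous) substring. -/
def Normalized {α : Type} (p : List (LikeSym α)) : Prop :=
  ¬ [LikeSym.percent, LikeSym.wild] <:+: p ∧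
  ¬ [LikeSym.percent, LikeSym.percent] <:+: p

/-!
Read a pattern as a product of languages, one factor per symbol, and let `S` be the language of
`_`. The language of `%` is the Kleene star `S∗`, so `%_ = _%` is the identity `S∗ * S = S * S∗`
and `%% = %` is `S∗ * S∗ = S∗`. Hence a `%` put in front of a normalized pattern can be moved past
the leading block of `_`; it then stops at a constant or at the end, or is absorbed by another `%`.
-/

section

open scoped Computability

variable {α : Type}

/-- The language denoted by a single pattern symbol, as an element of Mathlib's Kleene algebra
`Language α`. -/
def LikeSym.language (s : LikeSym α) : Language α :=
  {w | SymMatches s w}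

theorem LikeSym.language_percent :
    (percent : LikeSym α).language = (wild : LikeSym α).language∗ := by
  ext w
  refine iff_of_true trivial (Language.mem_kstar.2 ⟨w.map fun a => [a], ?_, ?_⟩)
  · exact (List.flatMap_singleton' w).symm
  · intro u hu
    obtain ⟨a, -, rfl⟩ := List.mem_map.1 hu
    rfl

theorem LikeSym.language_percent_mul_self :
    (percent : LikeSym α).language * percent.language = percent.language := by
  rw [language_percent, kstar_mul_kstar]

theorem LikeSym.language_wild_mul_percent :
    (wild : LikeSym α).language * percent.language = percent.language * wild.language := by
  rw [language_percent, Language.mul_self_kstar_comm]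

/-- The language of a LIKE pattern, encoded as the product of the languages of its symbols so that
equivalences of patterns become identities in a Kleene algebra. -/
def patternLanguage (p : List (LikeSym α)) : Language α :=
  (p.map LikeSym.language).prod

theorem patternLanguage_cons (s : LikeSym α) (p : List (LikeSym α)) :
    patternLanguage (s :: p) = s.language * patternLanguage p :=
  List.prod_cons

theorem mem_patternLanguage {p : List (LikeSym α)} {w : List α} :
    w ∈ patternLanguage p ↔ Matches p w := by
  induction p generalizing w with
  | nil => rfl
  | cons s p ih =>
    rw [patternLanguage_cons, Language.mem_mul]
    constructor
    · rintro ⟨u, hu, v, hv, rfl⟩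
      exact ⟨u, v, rfl, hu, ih.1 hv⟩
    · rintro ⟨u, v, rfl, hu, hv⟩
      exact ⟨u, hu, v, ih.2 hv, rfl⟩

theorem normalized_nil : Normalized ([] : List (LikeSym α)) := by
  simp [Normalized]

theorem normalized_cons {s : LikeSym α} {p : List (LikeSym α)} :
    Normalized (s :: p) ↔
      (s = .percent → ∀ t ∈ p.head?, ∃ a, t = .const a) ∧ Normalized p := by
  rcases p with _ | ⟨_ | _ | _, p⟩ <;> cases s <;>
    simp [Normalized, List.infix_cons_iff, List.cons_prefix_cons]

/-- Prepends a `%` to a pattern and restores normality: the `%` moves to the right past the leading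
`_` symbols and is merged with a `%` found there. -/
def consPercent : List (LikeSym α) → List (LikeSym α)
  | [] => [.percent]
  | .const a :: p => .percent :: .const a :: p
  | .wild :: p => .wild :: consPercent p
  | .percent :: p => .percent :: p

theorem normalized_consPercent {p : List (LikeSym α)} (hp : Normalized p) :
    Normalized (consPercent p) := by
  induction p with
  | nil => simp [consPercent, normalized_cons, normalized_nil]
  | cons s p ih =>
    cases s with
    | const a => exact normalized_cons.2 ⟨by simp, hp⟩
    | wild => exact normalized_cons.2 ⟨nofun, ih (normalized_cons.1 hp).2⟩
    | percent => exact hp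

theorem patternLanguage_consPercent (p : List (LikeSym α)) :
    patternLanguage (consPercent p) = LikeSym.percent.language * patternLanguage p := by
  induction p with
  | nil => rfl
  | cons s p ih =>
    cases s with
    | const a => rfl
    | wild =>
      calc patternLanguage (.wild :: consPercent p)
          = LikeSym.wild.language * (LikeSym.percent.language * patternLanguage p) := by
            rw [patternLanguage_cons, ih]
        _ = LikeSym.percent.language * patternLanguage (.wild :: p) := by
            rw [← mul_assoc, LikeSym.language_wild_mul_percent, mul_assoc, patternLanguage_cons]
    | percent =>
      calc patternLanguage (.percent :: p)
          = LikeSym.percent.language * LikeSym.percent.language * patternLanguage p := by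
            rw [LikeSym.language_percent_mul_self, patternLanguage_cons]
        _ = LikeSym.percent.language * patternLanguage (.percent :: p) := by
            rw [mul_assoc, patternLanguage_cons]

/-- The normal form of a pattern, in which every `%` has been moved to the end of its block of
wildcards and merged with the others there. -/
def normalizePattern : List (LikeSym α) → List (LikeSym α)
  | [] => []
  | .const a :: p => .const a :: normalizePattern p
  | .wild :: p => .wild :: normalizePattern p
  | .percent :: p => consPercent (normalizePattern p)

theorem normalized_normalizePattern (p : List (LikeSym α)) : Normalized (normalizePattern p) := by
  induction p with
  | nil => exact normalized_nil
  | cons s p ih =>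
    cases s with
    | const a => exact normalized_cons.2 ⟨nofun, ih⟩
    | wild => exact normalized_cons.2 ⟨nofun, ih⟩
    | percent => exact normalized_consPercent ih

theorem patternLanguage_normalizePattern (p : List (LikeSym α)) :
    patternLanguage (normalizePattern p) = patternLanguage p := by
  induction p with
  | nil => rfl
  | cons s p ih =>
    cases s <;>
      simp only [normalizePattern, patternLanguage_consPercent, patternLanguage_cons, ih]

end

/-- For every LIKE pattern there is an equivalent normalized LIKE pattern. -/
theorem exists_equivalent_normalized_pattern {α : Type} (p : List (LikeSym α)) :
    ∃ p' : List (LikeSym α), Normalized p' ∧ ∀ w : List α, Matches p' w ↔ Matches p w := by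
  refine ⟨normalizePattern p, normalized_normalizePattern p, fun w => ?_⟩
  rw [← mem_patternLanguage, patternLanguage_normalizePattern, mem_patternLanguage]
end

section
/- If the language of a single LIKE pattern p over an alphabet Σ (with Σ nonempty) is finite, then all strings in that language have the same length. Consequently, for an alphabet Σ with |Σ| ≥ 2 and a letter a ∈ Σ, the two-element language {a, ε} (consisting of the one-letter string a and the empty string) is not the language of any single LIKE pattern over Σ. -/
/-!
The string matched by a `%` can be replaced by any other string. Hence over a nonempty alphabet a
pattern that contains `%` and matches some string matches infinitely many. Every other pattern
matches only strings with exactly one letter per symbol.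
-/

section

variable {α : Type} {p : List (LikeSym α)} {w : List α}

theorem SymMatches.length_eq_one {s : LikeSym α} (h : SymMatches s w) (hs : s ≠ .percent) :
    w.length = 1 := by
  cases s with
  | const a => exact List.length_eq_one_iff.mpr ⟨a, h⟩
  | wild => exact h
  | percent => exact absurd rfl hs

namespace Matches

theorem length_eq_of_percent_notMem (h : Matches p w) (hp : .percent ∉ p) :
    w.length = p.length := by
  induction p generalizing w with
  | nil => exact congrArg List.length h
  | cons s p ih =>
    obtain ⟨u, v, rfl, hu, hv⟩ := h
    obtain ⟨hs, hp⟩ := List.ne_and_not_mem_of_not_mem_cons hp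
    rw [List.length_append, hu.length_eq_one hs.symm, ih hv hp, List.length_cons, add_comm]

theorem exists_forall_append_of_percent_mem (h : Matches p w) (hp : .percent ∈ p) :
    ∃ u v, ∀ x, Matches p (u ++ x ++ v) := by
  induction p generalizing w with
  | nil => exact absurd hp List.not_mem_nil
  | cons s p ih =>
    obtain ⟨w₁, w₂, -, h₁, h₂⟩ := h
    rcases List.mem_cons.mp hp with rfl | hp
    · exact ⟨[], w₂, fun x => ⟨x, w₂, rfl, trivial, h₂⟩⟩
    · obtain ⟨u, v, huv⟩ := ih h₂ hp
      exact ⟨w₁ ++ u, v, fun x => ⟨w₁, u ++ x ++ v, by simp only [List.append_assoc], h₁, huv x⟩⟩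

theorem infinite_of_percent_mem [Nonempty α] (h : Matches p w) (hp : .percent ∈ p) :
    {w | Matches p w}.Infinite := by
  obtain ⟨u, v, huv⟩ := h.exists_forall_append_of_percent_mem hp
  have h_inj : Function.Injective fun x => u ++ x ++ v :=
    (List.append_left_injective v).comp (List.append_right_injective u)
  exact Set.infinite_of_injective_forall_mem h_inj huv

theorem length_eq_of_finite [Nonempty α] (h : Matches p w) (hfin : {w | Matches p w}.Finite) :
    w.length = p.length :=
  h.length_eq_of_percent_notMem fun hp => h.infinite_of_percent_mem hp hfin

end Matches

end

theorem finite_like_language_uniform_length_general {α : Type} [Nonempty α]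
    (p : List (LikeSym α)) :
    ({w | Matches p w}.Finite → ∀ w, Matches p w → w.length = p.length) ∧
      ∀ a : α, {w | Matches p w} ≠ {[a], []} := by
  refine ⟨fun hfin w h => h.length_eq_of_finite hfin, fun a hL => ?_⟩
  have hfin : {w | Matches p w}.Finite := hL ▸ Set.toFinite {[a], []}
  have h_letter : Matches p [a] := hL.ge (Set.mem_insert _ _)
  have h_nil : Matches p [] := hL.ge (Set.mem_insert_of_mem _ rfl)
  have h_len : [a].length = ([] : List α).length :=
    (h_letter.length_eq_of_finite hfin).trans (h_nil.length_eq_of_finite hfin).symm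
  exact one_ne_zero h_len

/-- If the language of a single LIKE pattern over a nonempty alphabet is finite,
then all strings in it have the same length; consequently, over an alphabet with
at least two letters, `{a, ε}` is not the language of any single LIKE pattern. -/
theorem finite_like_language_uniform_length {α : Type} [Nonempty α] :
    (∀ p : List (LikeSym α), ({w : List α | Matches p w}).Finite →
      ∀ w₁ w₂ : List α, Matches p w₁ → Matches p w₂ → w₁.length = w₂.length) ∧
    (∀ a b : α, a ≠ b → ∀ p : List (LikeSym α),
      {w : List α | Matches p w} ≠ ({[a], []} : Set (List α))) := by
  refine ⟨fun p hfin w₁ w₂ h₁ h₂ => ?_, fun a _ _ p =>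
    (finite_like_language_uniform_length_general p).2 a⟩
  have h_len := (finite_like_language_uniform_length_general p).1 hfin
  exact (h_len w₁ h₁).trans (h_len w₂ h₂).symm
end

section
/- Let Σ be a finite alphabet with |Σ| ≥ 2. Then every finite language L ⊆ Σ* is the language of some monotone LIKE expression over Σ, and every cofinite language L ⊆ Σ* (a language whose complement in Σ* is finite) is the language of some monotone LIKE expression over Σ. -/
/-- A LIKE expression: a boolean combination (AND, OR, NOT) of LIKE patterns. -/
inductive LikeExpr (α : Type) : Type where
  | pat : List (LikeSym α) → LikeExpr α
  | and : LikeExpr α → LikeExpr α → LikeExpr α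
  | or : LikeExpr α → LikeExpr α → LikeExpr α
  | not : LikeExpr α → LikeExpr α

/-- A string matches a LIKE expression if the boolean combination of the
individual pattern-matching conditions evaluates to true. -/
def EMatches {α : Type} : LikeExpr α → List α → Prop
  | .pat p, w => Matches p w
  | .and e f, w => EMatches e w ∧ EMatches f w
  | .or e f, w => EMatches e w ∨ EMatches f w
  | .not e, w => ¬ EMatches e w

/-- A LIKE expression is monotone if it contains no negation. -/
def MonotoneExpr {α : Type} : LikeExpr α → Prop
  | .pat _ => True
  | .and e f => MonotoneExpr e ∧ MonotoneExpr f
  | .or e f => MonotoneExpr e ∧ MonotoneExpr f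
  | .not _ => False

section

variable {α : Type} {L M : Set (List α)}

theorem matches_map_const {u w : List α} : Matches (u.map LikeSym.const) w ↔ w = u := by
  induction u generalizing w with
  | nil => simp [Matches]
  | cons a u ih => simp [Matches, SymMatches, ih]

theorem matches_replicate_wild_append_percent {n : ℕ} {w : List α} :
    Matches (List.replicate n LikeSym.wild ++ [LikeSym.percent]) w ↔ n ≤ w.length := by
  induction n generalizing w with
  | zero => simp [Matches, SymMatches]
  | succ n ih =>
    simp only [List.replicate_succ, List.cons_append, Matches, SymMatches, ih]
    constructor
    · rintro ⟨u, v, rfl, hu, hv⟩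
      rw [List.length_append]
      omega
    · intro hw
      cases w with
      | nil => simp at hw
      | cons a v => exact ⟨[a], v, rfl, rfl, by simpa using hw⟩

/-- A language is monotone expressible if it is the language of a LIKE expression without
negation. Languages are encoded as plain sets of words. -/
def MonotoneExpressible (L : Set (List α)) : Prop :=
  ∃ e : LikeExpr α, MonotoneExpr e ∧ L = {w : List α | EMatches e w}

namespace MonotoneExpressible

theorem union (hL : MonotoneExpressible L) (hM : MonotoneExpressible M) :
    MonotoneExpressible (L ∪ M) := by
  obtain ⟨e, he, rfl⟩ := hL
  obtain ⟨f, hf, rfl⟩ := hM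
  exact ⟨.or e f, ⟨he, hf⟩, rfl⟩

theorem inter (hL : MonotoneExpressible L) (hM : MonotoneExpressible M) :
    MonotoneExpressible (L ∩ M) := by
  obtain ⟨e, he, rfl⟩ := hL
  obtain ⟨f, hf, rfl⟩ := hM
  exact ⟨.and e f, ⟨he, hf⟩, rfl⟩

theorem singleton (u : List α) : MonotoneExpressible {u} :=
  ⟨.pat (u.map .const), trivial, Set.ext fun _ => matches_map_const.symm⟩

theorem setOf_le_length (n : ℕ) : MonotoneExpressible {w : List α | n ≤ w.length} :=
  ⟨.pat (List.replicate n .wild ++ [.percent]), trivial,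
    Set.ext fun _ => matches_replicate_wild_append_percent.symm⟩

theorem empty : MonotoneExpressible (∅ : Set (List α)) := by
  have disjoint : ({[]} ∩ {w : List α | 1 ≤ w.length}) = ∅ := by simp
  exact disjoint ▸ (singleton []).inter (setOf_le_length 1)

theorem of_finite (hL : L.Finite) : MonotoneExpressible L := by
  induction L, hL using Set.Finite.induction_on with
  | empty => exact empty
  | insert _ _ ih => exact Set.insert_eq _ _ ▸ (singleton _).union ih

theorem of_forall_le_length_mem [Finite α] {n : ℕ} (hL : ∀ w : List α, n ≤ w.length → w ∈ L) :
    MonotoneExpressible L := by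
  have short_finite : (L ∩ {w | w.length < n}).Finite :=
    (List.finite_length_lt α n).inter_of_right L
  have split : L = (L ∩ {w | w.length < n}) ∪ {w | n ≤ w.length} := by
    ext w
    have long_mem := hL w
    have short_or_long := lt_or_ge w.length n
    simp only [Set.mem_union, Set.mem_inter_iff, Set.mem_ofPred_eq]
    tauto
  rw [split]
  exact (of_finite short_finite).union (setOf_le_length n)

theorem of_finite_compl [Finite α] (hL : Lᶜ.Finite) : MonotoneExpressible L := by
  obtain ⟨n, hn⟩ := (hL.image List.length).bddAbove
  have long_mem (w : List α) (hw : n + 1 ≤ w.length) : w ∈ L := by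
    by_contra hwL
    exact (hn (Set.mem_image_of_mem _ hwL)).not_gt hw
  exact of_forall_le_length_mem long_mem

end MonotoneExpressible

theorem finite_and_cofinite_monotone_like_expressible_general :
    (∀ L : Set (List α), L.Finite → MonotoneExpressible L) ∧
    (Finite α → ∀ L : Set (List α), Lᶜ.Finite → MonotoneExpressible L) :=
  ⟨fun _ => .of_finite, fun _ _ => .of_finite_compl⟩

end

/-- Over a finite alphabet with at least two letters, every finite language and
every cofinite language is the language of some monotone LIKE expression. -/
theorem finite_and_cofinite_monotone_like_expressible {α : Type} [Fintype α]
    (hcard : 2 ≤ Fintype.card α) :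
    (∀ L : Set (List α), L.Finite →
      ∃ e : LikeExpr α, MonotoneExpr e ∧ L = {w : List α | EMatches e w}) ∧
    (∀ L : Set (List α), Lᶜ.Finite →
      ∃ e : LikeExpr α, MonotoneExpr e ∧ L = {w : List α | EMatches e w}) := by
  obtain ⟨finite, cofinite⟩ := finite_and_cofinite_monotone_like_expressible_general (α := α)
  exact ⟨finite, cofinite inferInstance⟩
end

section
/- Let e be a monotone LIKE expression over an alphabet Σ and let N(e) denote the total number of constant symbols and single-character wildcards _ occurring in all patterns of e (occurrences of % are not counted). If some string over Σ matches e, then there exists a string w over Σ with |w| ≤ N(e) that matches e. -/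
/-- Test whether a pattern symbol is the multi-character wildcard `%`. -/
def isPercent {α : Type} : LikeSym α → Bool
  | .percent => true
  | _ => false

/-- The number of constant symbols and single-character wildcards `_` in a pattern
(occurrences of `%` are not counted). -/
def patN {α : Type} (p : List (LikeSym α)) : ℕ :=
  p.countP (fun s => !isPercent s)

/-- The total number of constant symbols and single-character wildcards `_`
occurring in all patterns of a LIKE expression. -/
def exprN {α : Type} : LikeExpr α → ℕ
  | .pat p => patN p
  | .and e f => exprN e + exprN f
  | .or e f => exprN e + exprN f
  | .not e => exprN e

section HasCore

open scoped List

variable {α ι : Type*} [DecidableEq ι] {P Q : List α → Prop} {f : ι → α} {l l₁ l₂ : List ι}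
  {m n : ℕ}

/-- The list of positions `l`, with letters given by `f`, has a core of size at most `n` for `P`: a
set `S` of at most `n` positions such that `P` holds of the string left after deleting any letters
outside `S`. Positions are kept separate from letters because equal letters may play different
roles in a match. -/
def HasCore (P : List α → Prop) (f : ι → α) (l : List ι) (n : ℕ) : Prop :=
  ∃ S : Finset ι, S.card ≤ n ∧ ∀ T : Finset ι, S ⊆ T → P ((l.filter (· ∈ T)).map f)

namespace HasCore

theorem mono (h : HasCore P f l m) (hPQ : ∀ w, P w → Q w) (hmn : m ≤ n) : HasCore Q f l n :=
  let ⟨S, hcard, hS⟩ := h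
  ⟨S, hcard.trans hmn, fun T hT => hPQ _ (hS T hT)⟩

theorem of_forall (hP : ∀ w, P w) : HasCore P f l 0 :=
  ⟨∅, Finset.card_empty.le, fun _ _ => hP _⟩

theorem of_map (h : P (l.map f)) : HasCore P f l l.length := by
  refine ⟨l.toFinset, l.toFinset_card_le, fun T hT => ?_⟩
  have filter_eq : l.filter (· ∈ T) = l :=
    List.filter_eq_self.2 fun i hi => decide_eq_true (hT (List.mem_toFinset.2 hi))
  rwa [filter_eq]

theorem and (hP : HasCore P f l m) (hQ : HasCore Q f l n) :
    HasCore (fun w => P w ∧ Q w) f l (m + n) := by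
  obtain ⟨S, hScard, hS⟩ := hP
  obtain ⟨S', hScard', hS'⟩ := hQ
  refine ⟨S ∪ S', (Finset.card_union_le S S').trans (Nat.add_le_add hScard hScard'), fun T hT => ?_⟩
  exact ⟨hS T (Finset.union_subset_left hT), hS' T (Finset.union_subset_right hT)⟩

theorem append (hP : HasCore P f l₁ m) (hQ : HasCore Q f l₂ n) :
    HasCore (fun w => ∃ u v, w = u ++ v ∧ P u ∧ Q v) f (l₁ ++ l₂) (m + n) := by
  obtain ⟨S, hScard, hS⟩ := hP
  obtain ⟨S', hScard', hS'⟩ := hQ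
  refine ⟨S ∪ S', (Finset.card_union_le S S').trans (Nat.add_le_add hScard hScard'), fun T hT => ?_⟩
  exact ⟨_, _, by rw [List.filter_append, List.map_append],
    hS T (Finset.union_subset_left hT), hS' T (Finset.union_subset_right hT)⟩

theorem exists_sublist_length_le (h : HasCore P f l n) (hl : l.Nodup) :
    ∃ l' : List ι, l' <+ l ∧ l'.length ≤ n ∧ P (l'.map f) := by
  obtain ⟨S, hcard, hS⟩ := h
  refine ⟨l.filter (· ∈ S), List.filter_sublist, ?_, hS S subset_rfl⟩
  have filter_subset : (l.filter (· ∈ S)).toFinset ⊆ S := fun i hi =>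
    of_decide_eq_true (List.mem_filter.1 (List.mem_toFinset.1 hi)).2
  calc (l.filter (· ∈ S)).length
      = (l.filter (· ∈ S)).toFinset.card := (List.toFinset_card_of_nodup (hl.filter _)).symm
    _ ≤ S.card := Finset.card_le_card filter_subset
    _ ≤ n := hcard

end HasCore

end HasCore

section Like

open scoped List

variable {α : Type} {ι : Type*} [DecidableEq ι] {f : ι → α} {l : List ι}

theorem patN_cons (s : LikeSym α) (p : List (LikeSym α)) : patN (s :: p) = patN [s] + patN p :=
  List.countP_append (l₁ := [s])

theorem SymMatches.hasCore {s : LikeSym α} (h : SymMatches s (l.map f)) :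
    HasCore (SymMatches s) f l (patN [s]) := by
  cases s with
  | const a =>
    have hlen : l.length = 1 := by simpa using congrArg List.length (show l.map f = [a] from h)
    exact (HasCore.of_map h).mono (fun _ => id) hlen.le
  | wild =>
    have hlen : l.length = 1 := by rwa [← List.length_map f]
    exact (HasCore.of_map h).mono (fun _ => id) hlen.le
  | percent => exact HasCore.of_forall fun _ => trivial

theorem Matches.hasCore {p : List (LikeSym α)} (h : Matches p (l.map f)) :
    HasCore (Matches p) f l (patN p) := by
  induction p generalizing l with
  | nil =>
    obtain rfl : l = [] := List.map_eq_nil_iff.1 h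
    exact HasCore.of_map h
  | cons s p ih =>
    obtain ⟨u, v, huv, hu, hv⟩ := h
    obtain ⟨lu, lv, rfl, rfl, rfl⟩ := List.map_eq_append_iff.1 huv
    rw [patN_cons]
    exact hu.hasCore.append (ih hv)

theorem EMatches.hasCore {e : LikeExpr α} (hmono : MonotoneExpr e) (h : EMatches e (l.map f)) :
    HasCore (EMatches e) f l (exprN e) := by
  induction e with
  | pat p => exact Matches.hasCore h
  | and e₁ e₂ ih₁ ih₂ => exact (ih₁ hmono.1 h.1).and (ih₂ hmono.2 h.2)
  | or e₁ e₂ ih₁ ih₂ =>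
    rcases h with h | h
    · exact (ih₁ hmono.1 h).mono (fun _ => Or.inl) (Nat.le_add_right _ _)
    · exact (ih₂ hmono.2 h).mono (fun _ => Or.inr) (Nat.le_add_left _ _)
  | not e _ => exact hmono.elim

theorem EMatches.exists_sublist_length_le {e : LikeExpr α} {w : List α} (hmono : MonotoneExpr e)
    (h : EMatches e w) : ∃ u : List α, u <+ w ∧ u.length ≤ exprN e ∧ EMatches e u := by
  have hw : (List.finRange w.length).map w.get = w := List.map_get_finRange w
  obtain ⟨l, hsub, hlen, hl⟩ :=
    (EMatches.hasCore hmono (hw.symm ▸ h)).exists_sublist_length_le (List.nodup_finRange _)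
  have hsub_map : l.map w.get <+ (List.finRange w.length).map w.get := hsub.map w.get
  rw [hw] at hsub_map
  exact ⟨l.map w.get, hsub_map, by rwa [List.length_map], hl⟩

end Like

/-- If some string matches a monotone LIKE expression `e`, then some string of
length at most `N(e)` matches `e`. -/
theorem monotone_like_short_witness {α : Type} (e : LikeExpr α)
    (hmono : MonotoneExpr e) (hne : ∃ w : List α, EMatches e w) :
    ∃ w : List α, w.length ≤ exprN e ∧ EMatches e w := by
  obtain ⟨w, hw⟩ := hne
  obtain ⟨u, -, hlen, hu⟩ := hw.exists_sublist_length_le hmono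
  exact ⟨u, hlen, hu⟩
end

section
/- Let F = (α_1 ∨ β_1 ∨ γ_1) ∧ ⋯ ∧ (α_m ∨ β_m ∨ γ_m) be a boolean formula in 3-CNF over variables x_1, …, x_n, where each α_k, β_k, γ_k is a literal (a variable x_i or its negation x̄_i). Consider the alphabet Γ = {x_1, …, x_n, x̄_1, …, x̄_n} of 2n symbols and the monotone LIKE expression e over Γ given by the conjunction of: (i) the pattern _^n (n single-character wildcards); (ii) for every 1 ≤ i ≤ n, the disjunction of the patterns %x_i% and %x̄_i%; and (iii) for every clause 1 ≤ k ≤ m, the disjunction of the patterns %α_k%, %β_k%, and %γ_k%. Then F is satisfiable if and only if some string over Γ matches e. -/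
/-- A literal over variables `x_1, …, x_n` is a pair `(i, b)`: the variable `x_i`
if `b = true` and its negation `x̄_i` if `b = false`.  Literals also serve as the
symbols of the alphabet `Γ = {x_1, …, x_n, x̄_1, …, x̄_n}`. -/
abbrev Lit (n : ℕ) : Type := Fin n × Bool

/-- A literal evaluates to true under an assignment `σ` iff `σ` gives its
variable the corresponding sign. -/
def LitEval {n : ℕ} (σ : Fin n → Bool) (ℓ : Lit n) : Prop := σ ℓ.1 = ℓ.2

/-- The LIKE pattern `%ℓ%` for a literal `ℓ`, as a LIKE expression. -/
def litPat {n : ℕ} (ℓ : Lit n) : LikeExpr (Lit n) :=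
  .pat [LikeSym.percent, LikeSym.const ℓ, LikeSym.percent]

/-- The monotone LIKE expression associated with a 3-CNF formula with `n`
variables and clauses `F k = (α_k, β_k, γ_k)`: the conjunction of
(i) the pattern `_^n`,
(ii) for each variable `i` the disjunction `%x_i% OR %x̄_i%`, and
(iii) for each clause `k` the disjunction `%α_k% OR %β_k% OR %γ_k%`. -/
def cnfExpr (n m : ℕ) (F : Fin m → Lit n × Lit n × Lit n) : LikeExpr (Lit n) :=
  ((List.ofFn fun i : Fin n => LikeExpr.or (litPat (i, true)) (litPat (i, false))) ++
   (List.ofFn fun k : Fin m =>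
      LikeExpr.or (litPat (F k).1) (LikeExpr.or (litPat (F k).2.1) (litPat (F k).2.2)))
  ).foldr LikeExpr.and (.pat (List.replicate n LikeSym.wild))

/-!
The pattern `%ℓ%` says that the letter `ℓ` occurs in the word, and `_^n` that the word has length
`n`. A word of length `n` mentioning each of the `n` variables has no room for a second literal of
any variable, so it lists, in some order, the literals true under an assignment `σ`. Such a word
contains a literal of a clause exactly when `σ` satisfies that clause.
-/

section Patterns

variable {α : Type}

theorem matches_const_cons {a : α} {p : List (LikeSym α)} {w : List α} :
    Matches (.const a :: p) w ↔ ∃ v, w = a :: v ∧ Matches p v := by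
  simp [Matches, SymMatches]

theorem matches_wild_cons {p : List (LikeSym α)} {w : List α} :
    Matches (.wild :: p) w ↔ ∃ a v, w = a :: v ∧ Matches p v := by
  constructor
  · rintro ⟨u, v, rfl, hu, hv⟩
    obtain ⟨a, rfl⟩ := List.length_eq_one_iff.1 hu
    exact ⟨a, v, rfl, hv⟩
  · rintro ⟨a, v, rfl, hv⟩
    exact ⟨[a], v, rfl, rfl, hv⟩

theorem matches_percent_cons {p : List (LikeSym α)} {w : List α} :
    Matches (.percent :: p) w ↔ ∃ v, v <:+ w ∧ Matches p v := by
  constructor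
  · rintro ⟨u, v, rfl, -, hv⟩
    exact ⟨v, List.suffix_append u v, hv⟩
  · rintro ⟨v, ⟨u, rfl⟩, hv⟩
    exact ⟨u, v, rfl, trivial, hv⟩

theorem matches_replicate_wild {n : ℕ} {w : List α} :
    Matches (List.replicate n .wild) w ↔ w.length = n := by
  induction n generalizing w with
  | zero => simp [Matches]
  | succ n ih =>
    simp only [List.replicate_succ, matches_wild_cons, ih, List.length_eq_succ_iff, eq_comm]

theorem matches_percent_singleton {w : List α} : Matches [.percent] w :=
  matches_percent_cons.2 ⟨[], List.nil_suffix, rfl⟩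

theorem matches_percent_const_percent {a : α} {w : List α} :
    Matches [.percent, .const a, .percent] w ↔ a ∈ w := by
  rw [matches_percent_cons]
  constructor
  · rintro ⟨_, hsuffix, hmatches⟩
    obtain ⟨v, rfl, -⟩ := matches_const_cons.1 hmatches
    exact hsuffix.subset List.mem_cons_self
  · intro ha
    obtain ⟨u, v, rfl⟩ := List.append_of_mem ha
    exact ⟨a :: v, List.suffix_append u _,
      matches_const_cons.2 ⟨v, rfl, matches_percent_singleton⟩⟩

theorem eMatches_foldr_and {l : List (LikeExpr α)} {e : LikeExpr α} {w : List α} :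
    EMatches (l.foldr .and e) w ↔ EMatches e w ∧ ∀ f ∈ l, EMatches f w := by
  induction l with
  | nil => simp
  | cons f l ih => simp [EMatches, ih, and_left_comm]

end Patterns

section GraphWord

variable {n : ℕ} {β : Type*}

/-- The graph of `f`, listed as a word. For an assignment `f : Fin n → Bool` its letters are the
literals true under `f`. -/
def graphWord (f : Fin n → β) : List (Fin n × β) :=
  List.ofFn fun i => (i, f i)

theorem length_graphWord (f : Fin n → β) : (graphWord f).length = n :=
  List.length_ofFn

theorem mem_graphWord {f : Fin n → β} {a : Fin n × β} : a ∈ graphWord f ↔ f a.1 = a.2 := by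
  simp [graphWord, List.mem_ofFn, Prod.ext_iff]

theorem nodup_graphWord (f : Fin n → β) : (graphWord f).Nodup :=
  List.nodup_ofFn.2 fun _ _ h => congrArg Prod.fst h

theorem length_eq_and_forall_exists_mem_iff_perm_graphWord {w : List (Fin n × β)} :
    (w.length = n ∧ ∀ i, ∃ b, (i, b) ∈ w) ↔ ∃ f, w.Perm (graphWord f) := by
  constructor
  · rintro ⟨hlength, hcover⟩
    choose f hf using hcover
    have hsubset : graphWord f ⊆ w := by
      rintro ⟨i, b⟩ h
      obtain rfl : f i = b := mem_graphWord.1 h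
      exact hf i
    have hsubperm : (graphWord f).Subperm w := (nodup_graphWord f).subperm hsubset
    have hlength_le : w.length ≤ (graphWord f).length := by rw [hlength, length_graphWord]
    exact ⟨f, (hsubperm.perm_of_length_le hlength_le).symm⟩
  · rintro ⟨f, hperm⟩
    exact ⟨hperm.length_eq.trans (length_graphWord f),
      fun i => ⟨f i, hperm.mem_iff.2 (mem_graphWord.2 rfl)⟩⟩

end GraphWord

theorem eMatches_litPat {n : ℕ} {ℓ : Lit n} {w : List (Lit n)} :
    EMatches (litPat ℓ) w ↔ ℓ ∈ w :=
  matches_percent_const_percent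

theorem eMatches_cnfExpr_iff_mem {n m : ℕ} {F : Fin m → Lit n × Lit n × Lit n}
    {w : List (Lit n)} :
    EMatches (cnfExpr n m F) w ↔
      (w.length = n ∧ ∀ i, ∃ b, (i, b) ∈ w) ∧
        ∀ k, (F k).1 ∈ w ∨ (F k).2.1 ∈ w ∨ (F k).2.2 ∈ w := by
  simp only [cnfExpr, eMatches_foldr_and, List.forall_mem_append, List.forall_mem_ofFn_iff,
    EMatches, eMatches_litPat, matches_replicate_wild, Bool.exists_bool, and_assoc,
    or_comm (a := (_, true) ∈ w)]

theorem eMatches_cnfExpr_iff_perm_graphWord {n m : ℕ} {F : Fin m → Lit n × Lit n × Lit n}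
    {w : List (Lit n)} :
    EMatches (cnfExpr n m F) w ↔
      ∃ σ : Fin n → Bool, w.Perm (graphWord σ) ∧
        ∀ k, LitEval σ (F k).1 ∨ LitEval σ (F k).2.1 ∨ LitEval σ (F k).2.2 := by
  rw [eMatches_cnfExpr_iff_mem, length_eq_and_forall_exists_mem_iff_perm_graphWord,
    ← exists_and_right]
  refine exists_congr fun σ => and_congr_right fun hperm => ?_
  have hmem (ℓ : Lit n) : ℓ ∈ w ↔ LitEval σ ℓ := hperm.mem_iff.trans mem_graphWord
  simp only [hmem]

/-- A 3-CNF formula `F` is satisfiable iff some string over `Γ` matches the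
associated monotone LIKE expression. -/
theorem threeSat_iff_cnfExpr_nonempty (n m : ℕ) (F : Fin m → Lit n × Lit n × Lit n) :
    (∃ σ : Fin n → Bool, ∀ k : Fin m,
        LitEval σ (F k).1 ∨ LitEval σ (F k).2.1 ∨ LitEval σ (F k).2.2) ↔
      ∃ w : List (Lit n), EMatches (cnfExpr n m F) w := by
  simp only [eMatches_cnfExpr_iff_perm_graphWord]
  constructor
  · rintro ⟨σ, hσ⟩
    exact ⟨graphWord σ, σ, .refl _, hσ⟩
  · rintro ⟨_, σ, -, hσ⟩
    exact ⟨σ, hσ⟩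
end
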